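/- Suppose f, g : ℝ^N → (−∞, ∞] are Borel measurable, m_f := inf f and m_g := inf g are finite, and m_f + m_g ≥ 0. Set m_{f,g} := (m_f − m_g)/2. Then f − m_{f,g}, g + m_{f,g} and f□g are nonnegative, f□g is Lebesgue measurable, and for every Young function φ: ‖(f − m_{f,g})⁻¹‖_φ + ‖(g + m_{f,g})⁻¹‖_φ ≤ 4 ‖(f□g)⁻¹‖_φ. -/

import Mathlib

open MeasureTheory Filter Set
open scoped ENNReal NNReal Pointwise

noncomputable section

/-- `ℝ^N` with the Euclidean structure and Lebesgue measure. -/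
abbrev ES (N : ℕ) := EuclideanSpace ℝ (Fin N)

variable {N : ℕ}

/-- The operation `(f ⊼ g)(x) = sup_y min (f (x - y)) (g y)` for extended-real valued
functions. -/
def supMinE (f g : ES N → EReal) (x : ES N) : EReal := ⨆ y, min (f (x - y)) (g y)

/-- The operation `(f ⊻ g)(x) = inf_y max (f (x - y)) (g y)` for extended-real valued
functions. -/
def infMaxE (f g : ES N → EReal) (x : ES N) : EReal := ⨅ y, max (f (x - y)) (g y)

/-- The infimal convolution `(f □ g)(x) = inf_y (f (x - y) + g y)`. -/
def infConvE (f g : ES N → EReal) (x : ES N) : EReal := ⨅ y, (f (x - y) + g y)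

/-- The operation `(f ⊼ g)(x) = sup_y min (f (x - y)) (g y)` for `[0,∞]`-valued functions. -/
def supMin (f g : ES N → ℝ≥0∞) (x : ES N) : ℝ≥0∞ := ⨆ y, min (f (x - y)) (g y)

/-- A Young function: a nonconstant, nondecreasing, convex, left-continuous
`φ : [0,∞] → [0,∞]` with `φ 0 = 0`. -/
structure IsYoungFunction (φ : ℝ≥0∞ → ℝ≥0∞) : Prop where
  nonconstant : ∃ x y, φ x ≠ φ y
  map_zero : φ 0 = 0
  mono : Monotone φ
  convex : ∀ ⦃a b x y : ℝ≥0∞⦄, a + b = 1 → φ (a * x + b * y) ≤ a * φ x + b * φ y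
  left_continuous : ∀ x, ContinuousWithinAt φ (Set.Iio x) x

/-- The Luxemburg norm `‖h‖_φ = inf {r > 0 | ∫ φ (r⁻¹ |h|) ≤ 1}` (`= ∞` if no such `r`),
for a nonnegative function `h`. -/
def luxNorm (φ : ℝ≥0∞ → ℝ≥0∞) (h : ES N → ℝ≥0∞) : ℝ≥0∞ :=
  sInf {r : ℝ≥0∞ | 0 < r ∧ ∫⁻ x, φ (r⁻¹ * h x) ≤ 1}

/-- The nonnegative part of an extended real, as an element of `[0,∞]`. -/
def toENN (a : EReal) : ℝ≥0∞ := if a = ⊤ then ⊤ else ENNReal.ofReal a.toReal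

/-- The reciprocal `1/a ∈ [0,∞]` of an extended real (intended for `a ≥ 0`), with the
conventions `1/0 = ∞` and `1/∞ = 0`. -/
def eInv (a : EReal) : ℝ≥0∞ := (toENN a)⁻¹

/-- The enclosing radius of a set `X ⊆ ℝ^N`: the infimum of the radii of closed balls
containing `X` (`0` for `X = ∅`, `∞` if `X` is unbounded). -/
def encRadius (X : Set (ES N)) : ℝ≥0∞ := sInf {r : ℝ≥0∞ | ∃ c : ES N, ∀ x ∈ X, edist x c ≤ r}

/-- The transform `f̂(x) = γ_f^+(|x|)` where `γ_f^+(t) = inf {ξ | ρ_f^+(ξ) ≤ t}` and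
`ρ_f^+(ξ)` is the enclosing radius of the upper level set `{f > ξ}`. -/
def hatE (f : ES N → EReal) (x : ES N) : EReal :=
  sInf {ξ : EReal | encRadius {y | ξ < f y} ≤ (‖x‖₊ : ℝ≥0∞)}

/-- The lower transform `f̌ = -((-f)^)`. -/
def checkE (f : ES N → EReal) (x : ES N) : EReal := - hatE (fun y => - f y) x

/-- The transform `f̂` for `[0,∞]`-valued functions. -/
def hatT (f : ES N → ℝ≥0∞) (x : ES N) : ℝ≥0∞ :=
  sInf {ξ : ℝ≥0∞ | encRadius {y | ξ < f y} ≤ (‖x‖₊ : ℝ≥0∞)}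

/-- The lower transform `f̌(x) = γ_f^-(|x|)`, `γ_f^-(t) = sup {ξ | ρ({f < ξ}) ≤ t}`,
for `[0,∞]`-valued functions. -/
def checkT (f : ES N → ℝ≥0∞) (x : ES N) : ℝ≥0∞ :=
  sSup {ξ : ℝ≥0∞ | encRadius {y | f y < ξ} ≤ (‖x‖₊ : ℝ≥0∞)}

/-- The `L^p` "norm" (`p ∈ [1,∞]`, essential supremum when `p = ∞`) of a `[0,∞]`-valued
function. -/
def pNorm (p : ℝ≥0∞) (h : ES N → ℝ≥0∞) : ℝ≥0∞ :=
  if p = ∞ then essSup h volume else (∫⁻ x, h x ^ p.toReal) ^ (1 / p.toReal)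

namespace MeasureTheory

/-- A continuous image of the Baire space is approximated from inside, for an outer regular
measure, by compact sets. -/
theorem exists_isCompact_subset_range_le_measure {α : Type*} [TopologicalSpace α]
    [MeasurableSpace α] (μ : Measure α) [μ.OuterRegular]
    {h : (ℕ → ℕ) → α} (hc : Continuous h) {r : ℝ≥0∞} (hr : r < μ (range h)) :
    ∃ K ⊆ range h, IsCompact K ∧ r ≤ μ K := by
  have step : ∀ (n : ℕ) (S : {S : Set (ℕ → ℕ) // r < μ (h '' S)}),
      ∃ m, r < μ (h '' (S.1 ∩ {z | z n ≤ m})) := by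
    rintro n ⟨S, hS⟩
    have hmono : Monotone fun m => h '' (S ∩ {z | z n ≤ m}) := fun m m' hm =>
      image_mono (inter_subset_inter_right _ fun z (hz : z n ≤ m) => hz.trans hm)
    have hU : S = ⋃ m, S ∩ {z | z n ≤ m} := by
      ext z
      simp only [mem_iUnion, mem_inter_iff, mem_ofPred_eq]
      exact ⟨fun hz => ⟨z n, hz, le_rfl⟩, fun ⟨_, hz, _⟩ => hz⟩
    rw [hU, image_iUnion, hmono.measure_iUnion] at hS
    exact lt_iSup_iff.1 hS
  choose m hm using step
  let S : ℕ → {S : Set (ℕ → ℕ) // r < μ (h '' S)} := fun n =>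
    Nat.rec ⟨univ, by rwa [image_univ]⟩ (fun n S => ⟨S.1 ∩ {z | z n ≤ m n S}, hm n S⟩) n
  let k : ℕ → ℕ := fun n => m n (S n)
  have hS : ∀ n z, z ∈ (S n).1 ↔ ∀ i < n, z i ≤ k i := by
    intro n
    induction n with
    | zero => intro z; simp [S]
    | succ n ih =>
      intro z
      change z ∈ (S n).1 ∩ {z | z n ≤ k n} ↔ _
      rw [mem_inter_iff, ih, Nat.forall_lt_succ_right]
      rfl
  have hbox : IsCompact (univ.pi fun i => Iic (k i)) :=
    isCompact_univ_pi fun i => (finite_Iic (k i)).isCompact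
  refine ⟨h '' univ.pi fun i => Iic (k i), image_subset_range _ _, hbox.image hc, ?_⟩
  by_contra! hlt
  obtain ⟨U, hKU, hUo, hUr⟩ := Set.exists_isOpen_lt_of_lt _ _ hlt
  have hout : ∀ n, ∃ z ∈ (S n).1, h z ∉ U := by
    intro n
    by_contra! hsub
    exact ((S n).2.trans_le (measure_mono (image_subset_iff.2 hsub))).not_gt hUr
  choose z hzS hzU using hout
  obtain ⟨w, hw, ψ, hψ, hlim⟩ := hbox.tendsto_subseq (x := fun n i => min (z n i) (k i))
    fun n i _ => mem_Iic.2 (min_le_right _ _)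
  have hlim' : Tendsto (fun n => z (ψ n)) atTop (nhds w) := by
    rw [tendsto_pi_nhds] at hlim ⊢
    intro i
    refine (hlim i).congr' ?_
    filter_upwards [eventually_gt_atTop i] with n hn
    exact min_eq_left ((hS _ _).1 (hzS (ψ n)) i (hn.trans_le hψ.le_apply))
  obtain ⟨n, hn⟩ := (((hc.tendsto w).comp hlim').eventually
    (hUo.mem_nhds (hKU (mem_image_of_mem h hw)))).exists
  exact hzU _ hn

/-- Analytic sets are universally measurable. -/
theorem AnalyticSet.nullMeasurableSet {α : Type*} [TopologicalSpace α]
    [TopologicalSpace.PseudoMetrizableSpace α] [T2Space α] [MeasurableSpace α] [BorelSpace α]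
    {s : Set α} (hs : AnalyticSet s) (μ : Measure α) [SFinite μ] : NullMeasurableSet s μ := by
  refine NullMeasurableSet.mono_ac ?_ (absolutelyContinuous_toFinite μ)
  generalize hν : μ.toFinite = ν
  have : IsFiniteMeasure ν := hν ▸ inferInstance
  rw [AnalyticSet] at hs
  obtain rfl | ⟨h, hc, rfl⟩ := hs
  · exact .empty
  obtain h0 | h0 := eq_zero_or_pos (ν (range h))
  · exact NullMeasurableSet.of_null h0
  obtain ⟨u, -, hu, hlim⟩ := exists_seq_strictMono_tendsto' h0
  choose K hKs hK huK using fun n => exists_isCompact_subset_range_le_measure ν hc (hu n).2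
  have hT : MeasurableSet (⋃ n, K n) := .iUnion fun n => (hK n).isClosed.measurableSet
  have hle : ν (range h) ≤ ν (⋃ n, K n) :=
    le_of_tendsto' hlim fun n => (huK n).trans (measure_mono (subset_iUnion _ _))
  exact hT.nullMeasurableSet.congr (ae_eq_of_subset_of_measure_ge (iUnion_subset hKs) hle
    hT.nullMeasurableSet (measure_ne_top _ _))

/-- The layer cake formula for `[0,∞]`-valued functions. -/
theorem lintegral_eq_lintegral_measure_ofReal_lt {α : Type*} [MeasurableSpace α]
    {μ : Measure α} [SFinite μ] {p : α → ℝ≥0∞} (hp : AEMeasurable p μ) :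
    ∫⁻ x, p x ∂μ = ∫⁻ t in Ioi (0 : ℝ), μ {x | ENNReal.ofReal t < p x} := by
  wlog hm : Measurable p generalizing p
  · rw [lintegral_congr_ae hp.ae_eq_mk, this hp.measurable_mk.aemeasurable hp.measurable_mk]
    refine lintegral_congr fun t => measure_congr ?_
    filter_upwards [hp.ae_eq_mk] with x hx
    exact congrArg (ENNReal.ofReal t < ·) hx.symm
  have hset : MeasurableSet {q : α × ℝ | ENNReal.ofReal q.2 < p q.1} :=
    measurableSet_lt (ENNReal.measurable_ofReal.comp measurable_snd) (hm.comp measurable_fst)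
  have hlayer : ∀ c : ℝ≥0∞,
      ∫⁻ t in Ioi (0 : ℝ), {t | ENNReal.ofReal t < c}.indicator 1 t = c := by
    intro c
    have hc : MeasurableSet {t : ℝ | ENNReal.ofReal t < c} :=
      measurableSet_lt ENNReal.measurable_ofReal measurable_const
    rw [lintegral_indicator_one hc, Measure.restrict_apply hc]
    induction c with
    | top => simp
    | coe c =>
      have : {t : ℝ | ENNReal.ofReal t < c} ∩ Ioi 0 = Ioo 0 (c : ℝ) := by
        ext t
        simp only [mem_inter_iff, mem_ofPred_eq, mem_Ioi, mem_Ioo]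
        constructor
        · rintro ⟨h1, h2⟩
          rw [← ENNReal.ofReal_coe_nnreal] at h1
          exact ⟨h2, (ENNReal.ofReal_lt_ofReal_iff'.1 h1).1⟩
        · rintro ⟨h1, h2⟩
          refine ⟨?_, h1⟩
          rw [← ENNReal.ofReal_coe_nnreal]
          exact (ENNReal.ofReal_lt_ofReal_iff (h1.trans h2)).2 h2
      rw [this, Real.volume_Ioo, sub_zero, ENNReal.ofReal_coe_nnreal]
  calc ∫⁻ x, p x ∂μ
      = ∫⁻ x, (∫⁻ t in Ioi (0 : ℝ),
          {q : α × ℝ | ENNReal.ofReal q.2 < p q.1}.indicator 1 (x, t)) ∂μ :=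
        lintegral_congr fun x => (hlayer (p x)).symm
    _ = ∫⁻ t in Ioi (0 : ℝ), ∫⁻ x,
          {q : α × ℝ | ENNReal.ofReal q.2 < p q.1}.indicator 1 (x, t) ∂μ :=
        lintegral_lintegral_swap (measurable_one.indicator hset).aemeasurable
    _ = _ := by
        refine lintegral_congr fun t => ?_
        exact lintegral_indicator_one (measurable_prodMk_right hset)

end MeasureTheory

/-- The infimal convolution of Borel functions is Lebesgue measurable. -/
theorem aemeasurable_infConvE {f g : ES N → EReal} (hf : Measurable f) (hg : Measurable g) :
    AEMeasurable (infConvE f g) (volume : Measure (ES N)) := by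
  apply NullMeasurable.aemeasurable
  refine measurable_of_Iio (mδ := NullMeasurableSpace.instMeasurableSpace) fun t => ?_
  have himg : infConvE f g ⁻¹' Iio t =
      Prod.fst '' {p : ES N × ES N | f (p.1 - p.2) + g p.2 < t} := by
    ext x
    simp [infConvE, iInf_lt_iff]
  have hmeas : MeasurableSet {p : ES N × ES N | f (p.1 - p.2) + g p.2 < t} :=
    measurableSet_lt ((hf.comp (measurable_fst.sub measurable_snd)).add (hg.comp measurable_snd))
      measurable_const
  have hnull : NullMeasurableSet (infConvE f g ⁻¹' Iio t) volume :=
    himg ▸ (hmeas.analyticSet_image measurable_fst).nullMeasurableSet volume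
  exact hnull

/-- Strict superlevel sets of a Young function are open upper intervals. -/
theorem IsYoungFunction.exists_lt_apply_iff {φ : ℝ≥0∞ → ℝ≥0∞} (hφ : IsYoungFunction φ)
    (τ : ℝ≥0∞) : ∃ s, ∀ w, τ < φ w ↔ s < w := by
  refine ⟨sInf {w | τ < φ w}, fun w => ⟨fun hw => ?_, fun hw => ?_⟩⟩
  · have hw0 : 0 < w := by
      rw [pos_iff_ne_zero]
      rintro rfl
      simp [hφ.map_zero] at hw
    have : (nhdsWithin w (Iio w)).NeBot := nhdsLT_neBot_of_exists_lt ⟨0, hw0⟩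
    obtain ⟨v, hv, hvw⟩ := (((hφ.left_continuous w).eventually_const_lt hw).and
      self_mem_nhdsWithin).exists
    exact lt_of_le_of_lt (sInf_le (mem_ofPred.2 hv)) hvw
  · obtain ⟨v, hv, hvw⟩ := sInf_lt_iff.1 hw
    exact lt_of_lt_of_le hv (hφ.mono hvw.le)

/-- If every nonempty strict sublevel set of `A` at height `t` can be translated into the strict
sublevel set of `C` at height `2 * t`, then `‖A⁻¹‖_φ ≤ 2 ‖C⁻¹‖_φ`. -/
theorem luxNorm_inv_le_two_mul {φ : ℝ≥0∞ → ℝ≥0∞} (hφ : IsYoungFunction φ)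
    {A C : ES N → ℝ≥0∞} (hA : AEMeasurable A) (hC : AEMeasurable C)
    (h : ∀ x t, A x < t → ∃ y, ∀ x', A x' < t → C (x' + y) < 2 * t) :
    luxNorm φ (fun x => (A x)⁻¹) ≤ 2 * luxNorm φ (fun x => (C x)⁻¹) := by
  have hlt : ∀ {c : ℝ≥0∞}, 0 < c → c ≠ ∞ → ∀ s a, s < c⁻¹ * a⁻¹ ↔ a < c⁻¹ * s⁻¹ := by
    intro c h0 hc s a
    rw [← ENNReal.mul_inv (.inl h0.ne') (.inl hc), ENNReal.lt_inv_iff_lt_inv, mul_comm c⁻¹,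
      ← div_eq_mul_inv, ENNReal.lt_div_iff_mul_lt (.inl h0.ne') (.inl hc), mul_comm]
  have hφm : Measurable φ := hφ.mono.measurable
  rw [mul_comm, ← ENNReal.div_le_iff_le_mul (.inl two_ne_zero) (.inl ENNReal.ofNat_ne_top)]
  refine le_sInf fun r ⟨hr0, hr⟩ => ?_
  rw [ENNReal.div_le_iff_le_mul (.inl two_ne_zero) (.inl ENNReal.ofNat_ne_top), mul_comm r]
  obtain rfl | hrt := eq_or_ne r ∞
  · simp
  have h2r0 : 0 < 2 * r := by positivity
  have h2rt : 2 * r ≠ ∞ := ENNReal.mul_ne_top ENNReal.ofNat_ne_top hrt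
  refine sInf_le ⟨h2r0, le_trans ?_ hr⟩
  have hmeas : ∀ (c : ℝ≥0∞) {D : ES N → ℝ≥0∞}, AEMeasurable D →
      AEMeasurable fun x => φ (c * (D x)⁻¹) := fun c _ hD =>
    hφm.comp_aemeasurable (hD.inv.const_mul c)
  rw [lintegral_eq_lintegral_measure_ofReal_lt (hmeas _ hA),
    lintegral_eq_lintegral_measure_ofReal_lt (hmeas _ hC)]
  refine lintegral_mono fun τ => ?_
  obtain ⟨s, hs⟩ := hφ.exists_lt_apply_iff (ENNReal.ofReal τ)
  have hsA : ∀ x, ENNReal.ofReal τ < φ ((2 * r)⁻¹ * (A x)⁻¹) ↔ A x < (2 * r)⁻¹ * s⁻¹ :=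
    fun x => (hs _).trans (hlt h2r0 h2rt s (A x))
  have hsC : ∀ x, ENNReal.ofReal τ < φ (r⁻¹ * (C x)⁻¹) ↔ C x < r⁻¹ * s⁻¹ :=
    fun x => (hs _).trans (hlt hr0 hrt s (C x))
  simp only [hsA, hsC]
  obtain hempty | ⟨x, hx⟩ := {x | A x < (2 * r)⁻¹ * s⁻¹}.eq_empty_or_nonempty
  · simp [hempty]
  obtain ⟨y, hy⟩ := h x _ hx
  rw [← measure_preimage_add_right volume y {x | C x < r⁻¹ * s⁻¹}]
  refine measure_mono fun x' hx' => (hy x' hx').trans_eq ?_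
  rw [ENNReal.mul_inv (.inl two_ne_zero) (.inl ENNReal.ofNat_ne_top), ← mul_assoc, ← mul_assoc,
    ENNReal.mul_inv_cancel two_ne_zero ENNReal.ofNat_ne_top, one_mul]

theorem EReal.sub_coe_add_add_coe (u v : EReal) (m : ℝ) : (u - m) + (v + m) = u + v := by
  rw [add_comm v, ← add_assoc, EReal.sub_add_cancel]

theorem luxNorm_inv_add_le_four_luxNorm_inv_infConv {N : ℕ} (hN : 0 < N)
    (f g : ES N → EReal) (hf : Measurable f) (hg : Measurable g)
    (hf' : ∀ x, f x ≠ ⊥) (hg' : ∀ x, g x ≠ ⊥)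
    (a b : ℝ) (ha : (⨅ x, f x) = (a : EReal)) (hb : (⨅ x, g x) = (b : EReal))
    (hab : 0 ≤ a + b) :
    (∀ x, 0 ≤ f x - (((a - b) / 2 : ℝ) : EReal)) ∧
    (∀ x, 0 ≤ g x + (((a - b) / 2 : ℝ) : EReal)) ∧
    (∀ x, 0 ≤ infConvE f g x) ∧
    AEMeasurable (infConvE f g) (volume : Measure (ES N)) ∧
    ∀ φ : ℝ≥0∞ → ℝ≥0∞, IsYoungFunction φ →
      luxNorm φ (fun x => eInv (f x - (((a - b) / 2 : ℝ) : EReal))) +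
        luxNorm φ (fun x => eInv (g x + (((a - b) / 2 : ℝ) : EReal))) ≤
      4 * luxNorm φ (fun x => eInv (infConvE f g x)) := by
  set m : ℝ := (a - b) / 2 with hm
  set c : ℝ := (a + b) / 2 with hc
  have hc0 : (0 : EReal) ≤ (c : EReal) := by
    exact_mod_cast div_nonneg hab zero_le_two
  have hF : ∀ x, (c : EReal) ≤ f x - m := by
    intro x
    rw [EReal.le_sub_iff_add_le (by simp) (by simp), ← EReal.coe_add,
      show c + m = a by rw [hc, hm]; ring, ← ha]
    exact iInf_le f x
  have hG : ∀ x, (c : EReal) ≤ g x + m := by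
    intro x
    rw [← EReal.sub_le_iff_le_add (by simp) (by simp), ← EReal.coe_sub,
      show c - m = b by rw [hc, hm]; ring, ← hb]
    exact iInf_le g x
  have hF' : ∀ t : EReal, c < t → ∃ y, f y - m < t := by
    intro t ht
    have : (⨅ x, f x) < t + m := by
      rw [ha, ← EReal.sub_lt_iff (by simp) (by simp), ← EReal.coe_sub,
        show a - m = c by rw [hc, hm]; ring]
      exact ht
    obtain ⟨y, hy⟩ := iInf_lt_iff.1 this
    exact ⟨y, (EReal.sub_lt_iff (by simp) (by simp)).2 hy⟩
  have hG' : ∀ t : EReal, c < t → ∃ y, g y + m < t := by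
    intro t ht
    have : (⨅ x, g x) < t - m := by
      rw [hb, EReal.lt_sub_iff_add_lt (by simp) (by simp), ← EReal.coe_add,
        show b + m = c by rw [hc, hm]; ring]
      exact ht
    obtain ⟨y, hy⟩ := iInf_lt_iff.1 this
    exact ⟨y, (EReal.lt_sub_iff_add_lt (by simp) (by simp)).1 hy⟩
  have hF0 : ∀ x, 0 ≤ f x - m := fun x => hc0.trans (hF x)
  have hG0 : ∀ x, 0 ≤ g x + m := fun x => hc0.trans (hG x)
  have hmeas := aemeasurable_infConvE hf hg
  refine ⟨hF0, hG0, fun x => le_iInf fun y => ?_, hmeas, fun φ hφ => ?_⟩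
  · rw [← EReal.sub_coe_add_add_coe _ _ m]
    exact add_nonneg (hF0 _) (hG0 _)
  have hsum : ∀ x y, (infConvE f g (x + y)).toENNReal ≤
      (f x - m).toENNReal + (g y + m).toENNReal := by
    intro x y
    rw [← EReal.toENNReal_add (hF0 x) (hG0 y), EReal.sub_coe_add_add_coe]
    refine EReal.toENNReal_le_toENNReal ((iInf_le _ y).trans_eq ?_)
    rw [add_sub_cancel_right]
  have hlt : ∀ {u : EReal} {t : ℝ≥0∞}, 0 ≤ u → (u.toENNReal < t ↔ u < t) := by
    intro u t hu
    rw [← EReal.coe_ennreal_lt_coe_ennreal_iff, EReal.coe_toENNReal hu]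
  have hfle : luxNorm φ (fun x => eInv (f x - m)) ≤
      2 * luxNorm φ (fun x => eInv (infConvE f g x)) := by
    refine luxNorm_inv_le_two_mul hφ (hf.sub_const _).ereal_toENNReal.aemeasurable
      hmeas.ereal_toENNReal fun x t hx => ?_
    obtain ⟨y, hy⟩ := hG' t ((hF x).trans_lt ((hlt (hF0 x)).1 hx))
    refine ⟨y, fun x' hx' => (hsum x' y).trans_lt ?_⟩
    rw [two_mul]
    exact ENNReal.add_lt_add hx' ((hlt (hG0 y)).2 hy)
  have hgle : luxNorm φ (fun x => eInv (g x + m)) ≤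
      2 * luxNorm φ (fun x => eInv (infConvE f g x)) := by
    refine luxNorm_inv_le_two_mul hφ (hg.add_const _).ereal_toENNReal.aemeasurable
      hmeas.ereal_toENNReal fun x t hx => ?_
    obtain ⟨y, hy⟩ := hF' t ((hG x).trans_lt ((hlt (hG0 x)).1 hx))
    refine ⟨y, fun x' hx' => ?_⟩
    rw [add_comm, two_mul]
    exact (hsum y x').trans_lt (ENNReal.add_lt_add ((hlt (hF0 y)).2 hy) hx')
  refine (add_le_add hfle hgle).trans_eq ?_
  rw [← add_mul]
  norm_num

end
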